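/- Assume Baumgartner's Axiom. If X ⊆ ℝ is uncountable and (X[≤])² is a normal topological space, then X contains an uncountable Q-set. -/

import Mathlib

/-- The Sorgenfrey (lower limit) topology on `ℝ`, generated by half-open
intervals `[a, b)` with `a < b`. -/
def sorgenfrey : TopologicalSpace ℝ :=
  TopologicalSpace.generateFrom {s : Set ℝ | ∃ a b : ℝ, a < b ∧ s = Set.Ico a b}

/-- The Sorgenfrey subspace topology on a set of reals `X`, i.e. `X[≤]`. -/
def sorgenfreySub (X : Set ℝ) : TopologicalSpace X :=
  sorgenfrey.induced Subtype.val

/-- The product topology `(X[≤])²` on `X × X`. -/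
def sorgenfreySq (X : Set ℝ) : TopologicalSpace (X × X) :=
  @instTopologicalSpaceProd X X (sorgenfreySub X) (sorgenfreySub X)

/-- A set of reals `X` is a Q-set if every subset of `X` is a relative `Gδ`-set
in `X` with respect to the Euclidean subspace topology. -/
def IsQSet (X : Set ℝ) : Prop :=
  ∀ A : Set ℝ, A ⊆ X → IsGδ (Subtype.val ⁻¹' A : Set X)

/-- A set of reals `Y` is ℵ₁-dense if its intersection with every nonempty open
interval has cardinality ℵ₁. -/
def Aleph1Dense (Y : Set ℝ) : Prop :=
  ∀ a b : ℝ, a < b → Cardinal.mk ↥(Y ∩ Set.Ioo a b) = Cardinal.aleph 1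

/-- Baumgartner's Axiom: any two ℵ₁-dense sets of reals are order isomorphic. -/
def BaumgartnerAxiom : Prop :=
  ∀ Y Z : Set ℝ, Aleph1Dense Y → Aleph1Dense Z → Nonempty (↥Y ≃o ↥Z)

open Topology

theorem sorg_fwd {s : Set ℝ} (hs : IsOpen[sorgenfrey] s) :
    ∀ x ∈ s, ∃ ε > 0, Set.Ico x (x + ε) ⊆ s := by
  induction hs with
  | basic s h =>
    obtain ⟨a, b, hab, rfl⟩ := h
    intro x hx
    refine ⟨b - x, by linarith [hx.2], fun y hy => ⟨hx.1.trans hy.1, by linarith [hy.2]⟩⟩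
  | univ => intro x _; exact ⟨1, one_pos, fun _ _ => trivial⟩
  | inter s t _ _ ihs iht =>
    intro x hx
    obtain ⟨e, he, h1⟩ := ihs x hx.1
    obtain ⟨d, hd, h2⟩ := iht x hx.2
    refine ⟨min e d, lt_min he hd, fun y hy => ⟨h1 ⟨hy.1, ?_⟩, h2 ⟨hy.1, ?_⟩⟩⟩
    · linarith [hy.2, min_le_left e d]
    · linarith [hy.2, min_le_right e d]
  | sUnion S _ ih =>
    rintro x ⟨t, ht, hx⟩
    obtain ⟨e, he, h⟩ := ih t ht x hx
    exact ⟨e, he, fun y hy => ⟨t, ht, h hy⟩⟩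

theorem sorg_sq_fwd {X : Set ℝ} {U : Set (X × X)} (hU : IsOpen[sorgenfreySq X] U)
    (p : X × X) (hp : p ∈ U) :
    ∃ ε > 0, ∀ q : X × X, (p.1 : ℝ) ≤ q.1 → (q.1 : ℝ) < p.1 + ε → (p.2 : ℝ) ≤ q.2 →
      (q.2 : ℝ) < p.2 + ε → q ∈ U := by
  obtain ⟨u, v, hu, hv, hpu, hpv, huv⟩ :=
    (@isOpen_prod_iff X X (sorgenfreySub X) (sorgenfreySub X) U).1 hU p.1 p.2 hp
  obtain ⟨u', hu', rfl⟩ := hu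
  obtain ⟨v', hv', rfl⟩ := hv
  obtain ⟨e, he, h1⟩ := sorg_fwd hu' _ hpu
  obtain ⟨d, hd, h2⟩ := sorg_fwd hv' _ hpv
  refine ⟨min e d, lt_min he hd, fun q a b c f => huv ⟨h1 ⟨a, ?_⟩, h2 ⟨c, ?_⟩⟩⟩
  · linarith [min_le_left e d]
  · linarith [min_le_right e d]

theorem sorg_sq_bwd {X : Set ℝ} {U : Set (X × X)}
    (h : ∀ p ∈ U, ∃ c d : ℝ, (p.1 : ℝ) < c ∧ (p.2 : ℝ) < d ∧
      ∀ q : X × X, (p.1 : ℝ) ≤ q.1 → (q.1 : ℝ) < c → (p.2 : ℝ) ≤ q.2 →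
      (q.2 : ℝ) < d → q ∈ U) : IsOpen[sorgenfreySq X] U := by
  refine (@isOpen_prod_iff X X (sorgenfreySub X) (sorgenfreySub X) U).2 ?_
  intro a b hab
  obtain ⟨c, d, hc, hd, H⟩ := h (a, b) hab
  refine ⟨Subtype.val ⁻¹' Set.Ico (a : ℝ) c, Subtype.val ⁻¹' Set.Ico (b : ℝ) d,
    ⟨_, TopologicalSpace.GenerateOpen.basic _ ⟨_, _, hc, rfl⟩, rfl⟩,
    ⟨_, TopologicalSpace.GenerateOpen.basic _ ⟨_, _, hd, rfl⟩, rfl⟩,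
    ⟨le_rfl, hc⟩, ⟨le_rfl, hd⟩, ?_⟩
  rintro ⟨x, y⟩ ⟨hx, hy⟩
  exact H (x, y) hx.1 hx.2 hy.1 hy.2

theorem graph_closed {X A : Set ℝ} {f : ℝ → ℝ} (hf : StrictAntiOn f A) :
    IsClosed[sorgenfreySq X] {p : X × X | (p.1 : ℝ) ∈ A ∧ (p.2 : ℝ) = f p.1} := by
  refine (@isOpen_compl_iff _ _ (sorgenfreySq X)).1 (sorg_sq_bwd ?_)
  rintro ⟨a, b⟩ hp
  simp only [Set.mem_compl_iff, Set.mem_setOf_eq] at hp ⊢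
  by_cases h1 : ∃ x ∈ A, (a : ℝ) < x ∧ (b : ℝ) < f x
  · obtain ⟨x, hx, hax, hbx⟩ := h1
    refine ⟨x, f x, hax, hbx, ?_⟩
    rintro q h1 h2 h3 h4 ⟨h5, h6⟩
    have := hf h5 hx h2
    linarith
  push Not at h1
  obtain ⟨d, hd, hd'⟩ : ∃ d : ℝ, (b : ℝ) < d ∧ ((a : ℝ) ∈ A → (b : ℝ) < f a → d ≤ f a) := by
    by_cases h : (b : ℝ) < f a
    · exact ⟨f a, h, fun _ _ => le_rfl⟩
    · exact ⟨b + 1, by linarith, fun _ h' => absurd h' h⟩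
  obtain ⟨c, hc, hc'⟩ : ∃ c : ℝ, (a : ℝ) < c ∧ (∀ x ∈ A, (a : ℝ) < x → f x = b → c ≤ x) := by
    by_cases h : ∃ x ∈ A, (a : ℝ) < x ∧ f x = b
    · obtain ⟨x, hx, hax, hfx⟩ := h
      refine ⟨x, hax, fun y hy _ hfy => ?_⟩
      exact (hf.injOn hx hy (hfx.trans hfy.symm)).le
    · push Not at h
      exact ⟨a + 1, by linarith, fun x hx h1 h2 => absurd h2 (h x hx h1)⟩
  refine ⟨c, d, hc, hd, ?_⟩
  rintro ⟨x, y⟩ h2 h3 h4 h5 ⟨h6, h7⟩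
  simp only at h2 h3 h4 h5 h6 h7
  rcases h2.eq_or_lt with h | h
  · rw [← h] at h6 h7
    rcases h4.eq_or_lt with h' | h'
    · exact hp ⟨h6, h'.trans h7⟩
    · rw [h7] at h' h5
      exact absurd (hd' h6 h') (not_le.2 h5)
  · have := h1 x h6 h
    have h8 : f x = b := le_antisymm this (h7 ▸ h4)
    exact absurd (hc' x h6 h h8) (not_le.2 h3)

theorem qset_of {X Y : Set ℝ} (hnorm : @NormalSpace (X × X) (sorgenfreySq X)) (hY : Y ⊆ X)
    {f : ℝ → ℝ} (hf : StrictAntiOn f Y) (hfX : ∀ y ∈ Y, f y ∈ X) (hc : ContinuousOn f Y) :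
    IsQSet Y := by
  intro A hA
  have hB : Y \ A ⊆ Y := Set.diff_subset
  obtain ⟨U, V, hU, hV, hAU, hBV, hUV⟩ :=
    (@NormalSpace.normal _ (sorgenfreySq X) hnorm) _ _
      (graph_closed (X := X) (hf.mono hA)) (graph_closed (X := X) (hf.mono hB))
      (Set.disjoint_left.2 fun p hp hq => hq.1.2 hp.1)
  let S : ℕ → Set Y := fun n => {x | (x : ℝ) ∉ A ∧ ∀ q : X × X, (x : ℝ) ≤ q.1 →
    (q.1 : ℝ) < x + 1 / ((n : ℝ) + 1) → f x ≤ q.2 → (q.2 : ℝ) < f x + 1 / ((n : ℝ) + 1) → q ∈ V}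
  have key : (Subtype.val ⁻¹' A : Set Y) = ⋂ n, (closure (S n))ᶜ := by
    ext x
    simp only [Set.mem_preimage, Set.mem_iInter, Set.mem_compl_iff]
    constructor
    · intro hx n hcl
      obtain ⟨e, he, hUe⟩ := sorg_sq_fwd hU (⟨x, hY x.2⟩, ⟨f x, hfX x x.2⟩) (hAU ⟨hx, rfl⟩)
      simp only at hUe
      have hn : (0 : ℝ) < 1 / ((n : ℝ) + 1) := by positivity
      set δ := min e (1 / ((n : ℝ) + 1)) with hδ
      have hδ0 : 0 < δ := lt_min he hn
      have hδ1 : δ ≤ e := min_le_left _ _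
      have hδ2 : δ ≤ 1 / ((n : ℝ) + 1) := min_le_right _ _
      have hfc : Continuous (fun y : Y => f y) := continuousOn_iff_continuous_restrict.1 hc
      have h1 : ∀ᶠ y : Y in nhds x, |(y : ℝ) - x| < δ := by
        have := (continuous_subtype_val (p := (· ∈ Y))).continuousAt (x := x)
        exact (Metric.tendsto_nhds.1 this δ hδ0)
      have h2 : ∀ᶠ y : Y in nhds x, |f y - f x| < δ :=
        Metric.tendsto_nhds.1 (hfc.continuousAt (x := x)) δ hδ0
      obtain ⟨y, hyS, hy1, hy2⟩ := ((mem_closure_iff_frequently.1 hcl).and_eventually (h1.and h2)).exists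
      obtain ⟨hyA, hyV⟩ := hyS
      rw [abs_lt] at hy1 hy2
      rcases lt_trichotomy (y : ℝ) x with h | h | h
      · have h' := hf y.2 x.2 h
        refine Set.disjoint_left.1 hUV
          (hUe (⟨x, hY x.2⟩, ⟨f y, hfX y y.2⟩) ?_ ?_ ?_ ?_) (hyV _ ?_ ?_ ?_ ?_) <;> simp only <;> linarith
      · exact hyA (h ▸ hx)
      · have h' := hf x.2 y.2 h
        refine Set.disjoint_left.1 hUV
          (hUe (⟨y, hY y.2⟩, ⟨f x, hfX x x.2⟩) ?_ ?_ ?_ ?_) (hyV _ ?_ ?_ ?_ ?_) <;> simp only <;> linarith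
    · intro h
      by_contra hx
      obtain ⟨e, he, hVe⟩ := sorg_sq_fwd hV (⟨x, hY x.2⟩, ⟨f x, hfX x x.2⟩) (hBV ⟨⟨x.2, hx⟩, rfl⟩)
      obtain ⟨n, hn⟩ := exists_nat_one_div_lt he
      refine h n (subset_closure ⟨hx, fun q a b c d => hVe q a ?_ c ?_⟩) <;> simp only <;> linarith
  rw [key]
  exact IsGδ.iInter fun n => isClosed_closure.isOpen_compl.isGδ

theorem dense_translates {Y : Set ℝ} (hY : Cardinal.mk Y = Cardinal.aleph 1) :
    Aleph1Dense (⋃ q : ℚ, (fun y => y + (q : ℝ)) '' Y) := by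
  have hZ : Cardinal.mk ↥(⋃ q : ℚ, (fun y => y + (q : ℝ)) '' Y) ≤ Cardinal.aleph 1 := by
    refine (Cardinal.mk_iUnion_le_sum_mk).trans ?_
    refine (Cardinal.sum_le_sum _ (fun _ => Cardinal.aleph 1)
      fun q => Cardinal.mk_image_le.trans hY.le).trans ?_
    rw [Cardinal.sum_const]
    simp
  intro a b hab
  refine le_antisymm ((Cardinal.mk_le_mk_of_subset Set.inter_subset_left).trans hZ) ?_
  have hYu : ¬ Y.Countable := by
    rw [← Cardinal.le_aleph0_iff_set_countable, hY, not_le]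
    exact Cardinal.aleph0_lt_aleph_one
  have h1 : ∃ q : ℚ, ¬ (Y ∩ {y | y + (q : ℝ) ∈ Set.Ioo a b}).Countable := by
    by_contra h
    push Not at h
    refine hYu ((Set.countable_iUnion h).mono fun y hy => ?_)
    obtain ⟨q, h1, h2⟩ := exists_rat_btwn (show a - y < b - y by linarith)
    refine Set.mem_iUnion.2 ⟨q, hy, ?_, ?_⟩ <;> linarith
  obtain ⟨q, hq⟩ := h1
  rw [← Cardinal.succ_aleph0, Order.succ_le_iff, ← not_le, Cardinal.le_aleph0_iff_set_countable]
  intro hcon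
  refine hq (Set.Countable.mono ?_ (hcon.preimage_of_injOn (f := fun y => y + (q : ℝ))
    (add_left_injective (q : ℝ)).injOn))
  rintro y ⟨hy, hy'⟩
  exact ⟨Set.mem_iUnion.2 ⟨q, y, hy, rfl⟩, hy'⟩

theorem exists_anti (hBA : BaumgartnerAxiom) (X : Set ℝ) (hX : ¬X.Countable) :
    ∃ Y ⊆ X, ¬ Y.Countable ∧ ∃ f : ℝ → ℝ, StrictAntiOn f Y ∧ ∀ y ∈ Y, f y ∈ X := by
  have hXc : Cardinal.aleph 1 ≤ Cardinal.mk X := by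
    rw [← Cardinal.succ_aleph0, Order.succ_le_iff, ← not_le, Cardinal.le_aleph0_iff_set_countable]
    exact hX
  obtain ⟨Y, hYX, hY⟩ := Cardinal.le_mk_iff_exists_subset.1 hXc
  have hYu : ¬ Y.Countable := by
    rw [← Cardinal.le_aleph0_iff_set_countable, hY, not_le]
    exact Cardinal.aleph0_lt_aleph_one
  set Z := ⋃ q : ℚ, (fun y => y + (q : ℝ)) '' Y with hZdef
  have hZ : Aleph1Dense Z := dense_translates hY
  have hZ' : Aleph1Dense (Neg.neg ⁻¹' Z) := by
    intro a b hab
    rw [← hZ (-b) (-a) (by linarith)]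
    have : Neg.neg ⁻¹' Z ∩ Set.Ioo a b = Neg.neg '' (Z ∩ Set.Ioo (-b) (-a)) := by
      ext x
      simp only [Set.mem_inter_iff, Set.mem_preimage, Set.mem_Ioo, Set.image_neg_eq_neg, Set.mem_neg]
      constructor
      · rintro ⟨h, h1, h2⟩; exact ⟨h, by linarith, by linarith⟩
      · rintro ⟨h, h1, h2⟩; exact ⟨h, by linarith, by linarith⟩
    rw [this]
    exact Cardinal.mk_image_eq neg_injective
  obtain ⟨g⟩ := hBA _ _ hZ hZ'
  have hYZ : ∀ y ∈ Y, y ∈ Z := fun y hy => Set.mem_iUnion.2 ⟨0, y, hy, by simp⟩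
  classical
  let h : ℝ → ℝ := fun x => if hx : x ∈ Z then -(g ⟨x, hx⟩ : ℝ) else 0
  have hh : ∀ x ∈ Z, h x ∈ Z := by
    intro x hx
    simp only [h, dif_pos hx]
    exact (g ⟨x, hx⟩).2
  have hanti : StrictAntiOn h Z := by
    intro x hx y hy hxy
    simp only [h, dif_pos hx, dif_pos hy]
    have : g ⟨x, hx⟩ < g ⟨y, hy⟩ := g.lt_iff_lt.2 hxy
    exact neg_lt_neg this
  have h1 : ∃ q : ℚ, ¬ (Y ∩ {y | h y - (q : ℝ) ∈ Y}).Countable := by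
    by_contra hcon
    push Not at hcon
    refine hYu ((Set.countable_iUnion hcon).mono fun y hy => ?_)
    obtain ⟨q, z, hz, hzq⟩ := Set.mem_iUnion.1 (hh y (hYZ y hy))
    refine Set.mem_iUnion.2 ⟨q, hy, ?_⟩
    simp only [Set.mem_setOf_eq, ← hzq]
    simpa using hz
  obtain ⟨q, hq⟩ := h1
  refine ⟨_, Set.inter_subset_left.trans hYX, hq, fun y => h y - q, ?_, fun y hy => hYX hy.2⟩
  intro x hx y hy hxy
  have := hanti (hYZ x hx.1) (hYZ y hy.1) hxy
  simp only; linarith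

/-- BA implies that if `X` is an uncountable set of reals and
`(X[≤])²` is normal, then `X` contains an uncountable Q-set. -/
theorem stmt4 (hBA : BaumgartnerAxiom) (X : Set ℝ) (hX : ¬X.Countable)
    (hnorm : @NormalSpace (X × X) (sorgenfreySq X)) :
    ∃ Q : Set ℝ, Q ⊆ X ∧ ¬Q.Countable ∧ IsQSet Q := by
  obtain ⟨Y, hYX, hYu, f, hf, hfX⟩ := exists_anti hBA X hX
  have hcnt := hf.antitoneOn.countable_not_continuousWithinAt
  have hsub : {y ∈ Y | ContinuousWithinAt f Y y} ⊆ Y := fun y hy => hy.1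
  refine ⟨{y ∈ Y | ContinuousWithinAt f Y y}, hsub.trans hYX, ?_, ?_⟩
  · intro h
    refine hYu ((h.union hcnt).mono fun y hy => ?_)
    by_cases hc : ContinuousWithinAt f Y y
    · exact Or.inl ⟨hy, hc⟩
    · exact Or.inr ⟨hy, hc⟩
  · exact qset_of hnorm (hsub.trans hYX) (hf.mono hsub) (fun y hy => hfX y hy.1)
      (fun y hy => hy.2.mono hsub)
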